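/- Fix ε ∈ (0, 1/2). Let a(n) be such that vol{x ∈ [0,1]^n : Σ x_i ≤ a(n)} = ε, define A_n = {x ∈ [0,1]^n : Σ x_i ≤ a(n)} and B_n = {x ∈ [0,1]^n : Σ x_i ≥ n - a(n)}. Then dist(A_n, B_n) = (n - 2a(n))/√n, and this quantity converges as n → ∞ to -2σ Φ⁻¹(ε) where σ = 1/√12; in particular dist(A_n, B_n) is bounded by a constant depending only on ε. -/

import Mathlib

open MeasureTheory Filter Real

/-- The infimum of distances between points of `A` and points of `B`. -/
noncomputable def setDist {n : ℕ} (A B : Set (EuclideanSpace ℝ (Fin n))) : ℝ :=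
  sInf {d | ∃ x ∈ A, ∃ y ∈ B, d = dist x y}

/-- The standard normal cumulative distribution function. -/
noncomputable def stdNormalCDF (t : ℝ) : ℝ :=
  (Real.sqrt (2 * π))⁻¹ * ∫ s in Set.Iic t, Real.exp (-s ^ 2 / 2)

/-- The corner simplex of the cube. -/
def cornerA (n : ℕ) (c : ℝ) : Set (EuclideanSpace ℝ (Fin n)) :=
  {x | (∀ i, x i ∈ Set.Icc (0 : ℝ) 1) ∧ ∑ i, x i ≤ c}

/-- The opposite corner simplex of the cube. -/
def cornerB (n : ℕ) (c : ℝ) : Set (EuclideanSpace ℝ (Fin n)) :=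
  {x | (∀ i, x i ∈ Set.Icc (0 : ℝ) 1) ∧ (n : ℝ) - c ≤ ∑ i, x i}

noncomputable def unifM : Measure ℝ := volume.restrict (Set.Icc (0:ℝ) 1)

instance : IsProbabilityMeasure unifM := ⟨by simp [unifM]⟩

noncomputable def unifP : Measure (ℕ → ℝ) := Measure.infinitePi (fun _ : ℕ => unifM)

instance : IsProbabilityMeasure unifP := by unfold unifP; infer_instance

lemma vol_cornerA (n : ℕ) (c : ℝ) :
    volume (cornerA n c) = unifP {ω | ∑ k ∈ Finset.range n, ω k ≤ c} := by
  have h1 : cornerA n c = (@WithLp.ofLp 2 (Fin n → ℝ)) ⁻¹'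
      ({x | ∑ i, x i ≤ c} ∩ Set.univ.pi (fun _ => Set.Icc (0:ℝ) 1)) := by
    ext x
    simp only [cornerA, Set.mem_ofPred_eq, Set.mem_preimage, Set.mem_inter_iff, Set.mem_pi,
      Set.mem_univ, true_imp_iff]
    tauto
  have hm : MeasurableSet {x : Fin n → ℝ | ∑ i, x i ≤ c} :=
    measurableSet_le (by fun_prop) (by fun_prop)
  have hm2 : MeasurableSet (Set.univ.pi (fun _ : Fin n => Set.Icc (0:ℝ) 1)) :=
    MeasurableSet.univ_pi (fun _ => measurableSet_Icc)
  rw [h1, (PiLp.volume_preserving_ofLp (Fin n)).measure_preimage (hm.inter hm2).nullMeasurableSet]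
  rw [← Measure.restrict_apply hm, volume_pi, Measure.restrict_pi_pi]
  have h2 := Measure.map_infinitePi_infinitePi_of_inj (P := fun _ : ℕ => unifM)
    (f := fun i : Fin n => (i : ℕ)) Fin.val_injective
  rw [Measure.infinitePi_eq_pi (ι := Fin n)] at h2
  change Measure.pi (fun _ => unifM) _ = _
  rw [← h2, Measure.map_apply (by fun_prop) hm]
  congr 1
  ext ω
  simp [Finset.sum_range]

lemma clt_unif (t : ℝ) : Tendsto
    (fun n : ℕ => unifP {ω | (√n)⁻¹ * ∑ k ∈ Finset.range n, (√12 * (ω k - 1/2)) ≤ t}) atTop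
    (nhds (ProbabilityTheory.gaussianReal 0 1 (Set.Iic t))) := by
  have hmp := measurePreserving_eval_infinitePi (fun _ : ℕ => unifM)
  have hI : ∀ f : ℝ → ℝ, Continuous f → ∫ ω, f (ω 0) ∂unifP = ∫ x in (0:ℝ)..1, f x := by
    intro f hf
    have := (hmp 0).map_eq
    rw [intervalIntegral.integral_of_le zero_le_one, ← integral_Icc_eq_integral_Ioc]
    change _ = ∫ x, f x ∂unifM
    rw [← this, integral_map (measurable_pi_apply 0).aemeasurable hf.aestronglyMeasurable]
    rfl
  have key := ProbabilityTheory.tendstoInDistribution_inv_sqrt_mul_sum (P := unifP)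
    (P' := ProbabilityTheory.gaussianReal 0 1) (Y := id)
    (X := fun k ω => √12 * (ω k - 1/2)) ProbabilityTheory.HasLaw.id
    (by
      rw [hI (fun x => √12 * (x - 1/2)) (by fun_prop)]
      simp)
    (by
      have := hI (fun x => (√12 * (x - 1/2))^2) (by fun_prop)
      simp only [Pi.pow_apply]
      rw [this]
      have e : ∀ x : ℝ, (√12 * (x - 1/2))^2 = 12 * x^2 - 12 * x + 3 := by
        intro x
        rw [mul_pow, Real.sq_sqrt (by norm_num)]; ring
      simp only [e]
      rw [intervalIntegral.integral_add, intervalIntegral.integral_sub]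
      · have e1 : ∫ x in (0:ℝ)..1, 12 * x ^ 2 = 4 := by
          rw [intervalIntegral.integral_const_mul, integral_pow]; norm_num
        have e2 : ∫ x in (0:ℝ)..1, 12 * x = 6 := by
          rw [intervalIntegral.integral_const_mul, integral_id]; norm_num
        rw [e1, e2, intervalIntegral.integral_const]
        norm_num
      all_goals exact Continuous.intervalIntegrable (by fun_prop) _ _)
    (ProbabilityTheory.iIndepFun_infinitePi (P := fun _ : ℕ => unifM)
      (X := fun _ x => √12 * (x - 1/2)) (by fun_prop))
    (by
      intro i
      refine ProbabilityTheory.IdentDistrib.comp (u := fun x : ℝ => √12 * (x - 1/2))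
        (f := fun ω : ℕ → ℝ => ω i) (g := fun ω : ℕ → ℝ => ω 0) ?_ (by fun_prop)
      exact ⟨(measurable_pi_apply i).aemeasurable, (measurable_pi_apply 0).aemeasurable, (hmp i).map_eq.trans (hmp 0).map_eq.symm⟩)
  have h2 := ProbabilityMeasure.tendsto_measure_of_null_frontier_of_tendsto' key.tendsto
    (E := Set.Iic t) (by
      simp only [frontier_Iic, ProbabilityMeasure.coe_mk, Measure.map_id]
      exact ProbabilityTheory.gaussianReal_absolutelyContinuous 0 one_ne_zero (by simp))
  simp only [ProbabilityMeasure.coe_mk, Measure.map_id] at h2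
  refine h2.congr fun n => ?_
  rw [Measure.map_apply (by fun_prop) measurableSet_Iic]
  rfl

lemma gauss_strict {s t : ℝ} (h : s < t) : ProbabilityTheory.gaussianReal 0 1 (Set.Iic s)
    < ProbabilityTheory.gaussianReal 0 1 (Set.Iic t) := by
  have hdj : Disjoint (Set.Iic s) (Set.Ioc s t) :=
    Set.disjoint_left.2 fun x hx hx2 => absurd hx2.1 (not_lt.2 hx)
  rw [← Set.Iic_union_Ioc_eq_Iic h.le, measure_union hdj measurableSet_Ioc]
  refine ENNReal.lt_add_right (measure_ne_top _ _) fun h0 => ?_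
  have := ProbabilityTheory.gaussianReal_absolutelyContinuous' 0 one_ne_zero h0
  simp at this
  linarith

lemma gauss_eq (t : ℝ) : ProbabilityTheory.gaussianReal 0 1 (Set.Iic t)
    = ENNReal.ofReal (stdNormalCDF t) := by
  rw [ProbabilityTheory.gaussianReal_apply_eq_integral _ one_ne_zero]
  simp [ProbabilityTheory.gaussianPDFReal, stdNormalCDF, integral_const_mul]

lemma clt_corner (t : ℝ) : Tendsto
    (fun n : ℕ => volume (cornerA n (n / 2 + t * √n / √12))) atTop
    (nhds (ProbabilityTheory.gaussianReal 0 1 (Set.Iic t))) := by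
  refine (clt_unif t).congr' ?_
  filter_upwards [eventually_ge_atTop 1] with n hn
  have hs : 0 < √(n:ℝ) := Real.sqrt_pos.2 (by exact_mod_cast hn)
  have h12 : 0 < √(12:ℝ) := Real.sqrt_pos.2 (by norm_num)
  rw [vol_cornerA]
  congr 1
  ext ω
  simp only [Set.mem_ofPred_eq]
  rw [← Finset.mul_sum, Finset.sum_sub_distrib]
  simp only [Finset.sum_const, Finset.card_range, nsmul_eq_mul]
  rw [inv_mul_le_iff₀ hs, ← sub_le_iff_le_add', le_div_iff₀ h12]
  constructor <;> intro h <;> linarith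

lemma cornerA_mono (n : ℕ) {c d : ℝ} (h : c ≤ d) : volume (cornerA n c) ≤ volume (cornerA n d) :=
  measure_mono fun _ hx => ⟨hx.1, hx.2.trans h⟩

lemma vol_cornerB (n : ℕ) (c : ℝ) : volume (cornerB n c) = volume (cornerA n c) := by
  have e : cornerB n c =
      (fun x => (WithLp.toLp 2 (fun _ => (1:ℝ)) : EuclideanSpace ℝ (Fin n)) - x) ⁻¹'
        cornerA n c := by
    ext x
    simp only [cornerB, cornerA, Set.mem_ofPred_eq, Set.mem_preimage, PiLp.sub_apply,
      Finset.sum_sub_distrib, Set.mem_Icc]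
    simp only [Finset.sum_const, Finset.card_univ, Fintype.card_fin, nsmul_eq_mul, mul_one]
    constructor
    · rintro ⟨h, h'⟩
      exact ⟨fun i => ⟨by linarith [(h i).2], by linarith [(h i).1]⟩, by linarith⟩
    · rintro ⟨h, h'⟩
      exact ⟨fun i => ⟨by linarith [(h i).2], by linarith [(h i).1]⟩, by linarith⟩
  rw [e]
  exact (volume.measurePreserving_sub_left _).measure_preimage_emb
    (MeasurableEquiv.subLeft _).measurableEmbedding _

lemma vol_cube (n : ℕ) :
    volume {x : EuclideanSpace ℝ (Fin n) | ∀ i, x i ∈ Set.Icc (0 : ℝ) 1} = 1 := by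
  have h1 : {x : EuclideanSpace ℝ (Fin n) | ∀ i, x i ∈ Set.Icc (0 : ℝ) 1} =
      (@WithLp.ofLp 2 (Fin n → ℝ)) ⁻¹' (Set.univ.pi (fun _ => Set.Icc (0:ℝ) 1)) := by
    ext x
    simp only [Set.mem_ofPred_eq, Set.mem_preimage, Set.mem_pi, Set.mem_univ, true_imp_iff]
  rw [h1, (PiLp.volume_preserving_ofLp (Fin n)).measure_preimage
    (MeasurableSet.univ_pi (fun _ => measurableSet_Icc)).nullMeasurableSet, volume_pi_pi]
  simp

lemma a_bounds {ε : ℝ} (hε : ε ∈ Set.Ioo (0 : ℝ) (1 / 2)) {n : ℕ} {c : ℝ}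
    (h : volume (cornerA n c) = ENNReal.ofReal ε) : 0 ≤ c ∧ 2 * c ≤ n := by
  constructor
  · by_contra hc
    have : cornerA n c = ∅ := by
      ext x
      simp only [cornerA, Set.mem_ofPred_eq, Set.mem_empty_iff_false, iff_false, not_and, not_le]
      intro hx
      have := Finset.sum_nonneg (s := Finset.univ) (fun i _ => (hx i).1)
      linarith
    rw [this, measure_empty] at h
    have := ENNReal.ofReal_eq_zero.1 h.symm
    linarith [hε.1]
  · by_contra hc
    have hsub : {x : EuclideanSpace ℝ (Fin n) | ∀ i, x i ∈ Set.Icc (0 : ℝ) 1}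
        ⊆ cornerA n c ∪ cornerB n c := by
      intro x hx
      rcases le_total (∑ i, x i) c with h1 | h1
      · exact Or.inl ⟨hx, h1⟩
      · exact Or.inr ⟨hx, by linarith⟩
    have h2 := (measure_mono hsub).trans (measure_union_le (μ := volume) _ _)
    rw [vol_cube, vol_cornerB, h, ← ENNReal.ofReal_add hε.1.le hε.1.le, ENNReal.one_le_ofReal] at h2
    linarith [hε.2]

lemma setDist_eq {n : ℕ} (hn : 1 ≤ n) {c : ℝ} (h0 : 0 ≤ c) (h1 : 2 * c ≤ n) :
    setDist (cornerA n c) (cornerB n c) = ((n : ℝ) - 2 * c) / √n := by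
  have hn' : (0:ℝ) < n := by exact_mod_cast hn
  have hs : 0 < √(n:ℝ) := Real.sqrt_pos.2 hn'
  have hss : √(n:ℝ) * √n = n := Real.mul_self_sqrt hn'.le
  refine IsLeast.csInf_eq ⟨?_, ?_⟩
  · refine ⟨WithLp.toLp 2 (fun _ => c / n), ⟨fun i => ⟨?_, ?_⟩, ?_⟩,
      WithLp.toLp 2 (fun _ => 1 - c / n), ⟨fun i => ⟨?_, ?_⟩, ?_⟩, ?_⟩
    · simp only; positivity
    · simp only; rw [div_le_one hn']; linarith
    · simp; field_simp; rfl
    · simp only [sub_nonneg]; rw [div_le_one hn']; linarith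
    · simp only [sub_le_self_iff]; positivity
    · simp; field_simp; linarith
    · rw [EuclideanSpace.dist_eq]
      simp only [Finset.sum_const, Finset.card_univ, Fintype.card_fin, nsmul_eq_mul, Real.dist_eq,
        sq_abs]
      rw [Real.sqrt_mul hn'.le, Real.sqrt_sq_eq_abs, abs_of_nonpos, div_eq_iff hs.ne',
        mul_right_comm, hss]
      · field_simp; ring
      · have : c / n ≤ 1 / 2 := by rw [div_le_iff₀ hn']; linarith
        linarith
  · rintro d ⟨x, hx, y, hy, rfl⟩
    rw [div_le_iff₀ hs, EuclideanSpace.dist_eq, ← Real.sqrt_mul (by positivity)]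
    apply Real.le_sqrt_of_sq_le
    have hcs := sq_sum_le_card_mul_sum_sq (s := (Finset.univ : Finset (Fin n)))
      (f := fun i => y i - x i)
    simp only [Finset.card_univ, Fintype.card_fin] at hcs
    have e : ∑ i, dist (x i) (y i) ^ 2 = ∑ i, (y i - x i)^2 := by
      refine Finset.sum_congr rfl fun i _ => ?_
      rw [Real.dist_eq, sq_abs]; ring
    rw [e, mul_comm _ (n:ℝ)]
    refine le_trans ?_ hcs
    have h3 : (n:ℝ) - 2 * c ≤ ∑ i, (y i - x i) := by
      rw [Finset.sum_sub_distrib]; linarith [hx.2, hy.2]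
    exact pow_le_pow_left₀ (by linarith) h3 2

/-- If `a n` is chosen so that the corner simplex `Aₙ` has volume `ε ∈ (0,1/2)`, and `Bₙ`
is its reflection in the center of the cube, then `dist (Aₙ, Bₙ) = (n - 2 a n)/√n`, which
converges to `-2 σ Φ⁻¹(ε)` (σ = 1/√12); in particular the distance is bounded by a
constant depending only on `ε`. -/
theorem dist_corner_simplices (ε : ℝ) (hε : ε ∈ Set.Ioo (0 : ℝ) (1 / 2))
    (a : ℕ → ℝ)
    (ha : ∀ n ≥ 1, volume (cornerA n (a n)) = ENNReal.ofReal ε)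
    (b : ℝ) (hb : stdNormalCDF b = ε) :
    (∀ n ≥ 1, setDist (cornerA n (a n)) (cornerB n (a n))
        = ((n : ℝ) - 2 * a n) / Real.sqrt n) ∧
    Tendsto (fun n : ℕ => ((n : ℝ) - 2 * a n) / Real.sqrt n) atTop
      (nhds (-2 * (1 / Real.sqrt 12) * b)) ∧
    ∃ C : ℝ, ∀ n ≥ 1, setDist (cornerA n (a n)) (cornerB n (a n)) ≤ C := by
  have hd : ∀ n ≥ 1, setDist (cornerA n (a n)) (cornerB n (a n))
        = ((n : ℝ) - 2 * a n) / Real.sqrt n := fun n hn =>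
    setDist_eq hn (a_bounds hε (ha n hn)).1 (a_bounds hε (ha n hn)).2
  have h12 : 0 < √(12:ℝ) := Real.sqrt_pos.2 (by norm_num)
  have hg : ProbabilityTheory.gaussianReal 0 1 (Set.Iic b) = ENNReal.ofReal ε := by
    rw [gauss_eq, hb]
  have ht : Tendsto (fun n : ℕ => (a n - n / 2) * √12 / √n) atTop (nhds b) := by
    rw [tendsto_order]
    constructor
    · intro t htb
      have h1 := (clt_corner t).eventually_lt_const (hg ▸ gauss_strict htb)
      filter_upwards [h1, eventually_ge_atTop 1] with n hn hn1
      have hs : 0 < √(n:ℝ) := Real.sqrt_pos.2 (by exact_mod_cast hn1)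
      rw [← ha n hn1] at hn
      by_contra! hc
      refine absurd hn (not_lt.2 (cornerA_mono n ?_))
      rw [div_le_iff₀ hs, ← le_div_iff₀ h12] at hc
      linarith
    · intro t htb
      have h1 := (clt_corner t).eventually_const_lt (hg ▸ gauss_strict htb)
      filter_upwards [h1, eventually_ge_atTop 1] with n hn hn1
      have hs : 0 < √(n:ℝ) := Real.sqrt_pos.2 (by exact_mod_cast hn1)
      rw [← ha n hn1] at hn
      by_contra! hc
      refine absurd hn (not_lt.2 (cornerA_mono n ?_))
      rw [le_div_iff₀ hs, ← div_le_iff₀ h12] at hc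
      linarith
  have hlim : Tendsto (fun n : ℕ => ((n : ℝ) - 2 * a n) / Real.sqrt n) atTop
      (nhds (-2 * (1 / Real.sqrt 12) * b)) := by
    refine (ht.const_mul (-2 * (1 / √12))).congr fun n => ?_
    have : -2 * (1 / √12) * ((a n - n / 2) * √12 / √n)
      = (√12 / √12) * (((n : ℝ) - 2 * a n) / √n) := by ring
    rw [this, div_self h12.ne', one_mul]
  refine ⟨hd, hlim, ?_⟩
  obtain ⟨C, hC⟩ := hlim.bddAbove_range
  exact ⟨C, fun n hn => (hd n hn).le.trans (hC ⟨n, rfl⟩)⟩
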